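/- arXiv:math/0501377 — 2 statements merged into one kernel-verified Lean document; each statement's English description precedes it below -/
import Mathlib

section
/- Let S be a join-semilattice with a least element 0, and let a₀, a₁ ∈ S be such that the set Q = {x ∈ S : x ≤ a₀ and x ≤ a₁} has no largest element. Then there exist a Boolean algebra B and a ⟨∨,0⟩-homomorphism μ : B → S such that: (a) μ(1) = a₀ ∨ a₁; and (b) there are no maps μ₀, μ₁ : B → S satisfying all three of the following: (i) μ(x) = μ₀(x) ∨ μ₁(x) for all x ∈ B; (ii) μ₀ and μ₁ are order-preserving; (iii) μ₀(1) ≤ a₀ and μ₁(1) ≤ a₁. -/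
/-!
Let `Q` be the set of common lower bounds of `a0` and `a1`; it is an ideal of `S` with no largest
element, hence infinite. Take for `B` the algebra of all subsets of `Q × (Q → Q)`, and put the
weight `φ q` on the point `(q, φ)`. The map `μ` sends a finite set to the join of its weights, an
infinite set meeting only finitely many rows `{q} × (Q → Q)` to `a0`, an infinite set meeting only
finitely many columns `Q × {φ}` to `a1`, and every other set to `a0 ⊔ a1`.

Suppose `μ = μ0 ⊔ μ1` is a splitting as in the statement. For a row, `f q = μ1 (row q)` lies below
`a1` and below `μ (row q) ≤ a0`, so it belongs to `Q`; likewise `g φ = μ0 (column φ)` belongs to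
`Q`. As `(q, φ)` lies on both the row and the column, monotonicity gives `φ q ≤ g φ ⊔ f q` for all
`q` and `φ`. Since `Q` has no largest element, there is `φ` with `φ q ≰ q ⊔ f q` for all `q`, and
taking `q = g φ` is a contradiction.
-/

/-- The common lower bounds of `a0` and `a1`. -/
abbrev CommonLower {S : Type u} [SemilatticeSup S] (a0 a1 : S) : Type u :=
  {x : S // x ≤ a0 ∧ x ≤ a1}

/-- The index set `Q × (Q → Q)`; a row fixes the first coordinate, a column the second. -/
abbrev Grid {S : Type u} [SemilatticeSup S] (a0 a1 : S) : Type u :=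
  CommonLower a0 a1 × (CommonLower a0 a1 → CommonLower a0 a1)

/-- The weight `φ q` of the point `(q, φ)`. -/
def weight {S : Type u} [SemilatticeSup S] {a0 a1 : S} (p : Grid a0 a1) : S := (p.2 p.1).1

open Classical in
/-- The values of the homomorphism: the join of the weights on finite sets, `a0` on infinite sets
meeting finitely many rows, `a1` on infinite sets meeting finitely many columns, and `a0 ⊔ a1`
elsewhere. A set is finite exactly when it meets finitely many rows and finitely many columns. -/
noncomputable def gridFun {S : Type u} [SemilatticeSup S] [OrderBot S] (a0 a1 : S)
    (X : Set (Grid a0 a1)) : S :=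
  if h : X.Finite then h.toFinset.sup weight
  else if (Prod.fst '' X).Finite then a0
  else if (Prod.snd '' X).Finite then a1
  else a0 ⊔ a1

section

variable {S : Type u} [SemilatticeSup S] [OrderBot S] {a0 a1 : S}

theorem finite_iff_images (X : Set (Grid a0 a1)) :
    X.Finite ↔ (Prod.fst '' X).Finite ∧ (Prod.snd '' X).Finite :=
  ⟨fun h => ⟨h.image _, h.image _⟩, fun h => (h.1.prod h.2).subset fun _ hp =>
    ⟨Set.mem_image_of_mem _ hp, Set.mem_image_of_mem _ hp⟩⟩

theorem sup_weight_le (F : Finset (Grid a0 a1)) : F.sup weight ≤ a0 ∧ F.sup weight ≤ a1 :=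
  ⟨Finset.sup_le fun p _ => (p.2 p.1).2.1, Finset.sup_le fun p _ => (p.2 p.1).2.2⟩

theorem gridFun_of_finite {X : Set (Grid a0 a1)} (h : X.Finite) :
    gridFun a0 a1 X = h.toFinset.sup weight := dif_pos h

theorem gridFun_finite_le {X : Set (Grid a0 a1)} (h : X.Finite) :
    gridFun a0 a1 X ≤ a0 ∧ gridFun a0 a1 X ≤ a1 := by
  rw [gridFun_of_finite h]; exact sup_weight_le _

theorem gridFun_of_rows {X : Set (Grid a0 a1)} (h : (Prod.fst '' X).Finite)
    (h' : ¬ (Prod.snd '' X).Finite) : gridFun a0 a1 X = a0 := by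
  rw [gridFun, dif_neg (fun hX => h' (hX.image _)), if_pos h]

theorem gridFun_of_columns {X : Set (Grid a0 a1)} (h : ¬ (Prod.fst '' X).Finite)
    (h' : (Prod.snd '' X).Finite) : gridFun a0 a1 X = a1 := by
  rw [gridFun, dif_neg (fun hX => h (hX.image _)), if_neg h, if_pos h']

theorem gridFun_of_infinite {X : Set (Grid a0 a1)} (h : ¬ (Prod.fst '' X).Finite)
    (h' : ¬ (Prod.snd '' X).Finite) : gridFun a0 a1 X = a0 ⊔ a1 := by
  rw [gridFun, dif_neg (fun hX => h (hX.image _)), if_neg h, if_neg h']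

theorem gridFun_le_left {X : Set (Grid a0 a1)} (h : (Prod.fst '' X).Finite) :
    gridFun a0 a1 X ≤ a0 := by
  by_cases h' : (Prod.snd '' X).Finite
  · exact (gridFun_finite_le ((finite_iff_images X).2 ⟨h, h'⟩)).1
  · exact (gridFun_of_rows h h').le

theorem gridFun_le_right {X : Set (Grid a0 a1)} (h : (Prod.snd '' X).Finite) :
    gridFun a0 a1 X ≤ a1 := by
  by_cases h' : (Prod.fst '' X).Finite
  · exact (gridFun_finite_le ((finite_iff_images X).2 ⟨h', h⟩)).2
  · exact (gridFun_of_columns h' h).le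

theorem gridFun_le (X : Set (Grid a0 a1)) : gridFun a0 a1 X ≤ a0 ⊔ a1 := by
  by_cases h : (Prod.fst '' X).Finite
  · exact (gridFun_le_left h).trans le_sup_left
  by_cases h' : (Prod.snd '' X).Finite
  · exact (gridFun_le_right h').trans le_sup_right
  · exact (gridFun_of_infinite h h').le

theorem left_le_gridFun {X : Set (Grid a0 a1)} (h : ¬ (Prod.snd '' X).Finite) :
    a0 ≤ gridFun a0 a1 X := by
  by_cases h' : (Prod.fst '' X).Finite
  · exact (gridFun_of_rows h' h).ge
  · exact le_sup_left.trans (gridFun_of_infinite h' h).ge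

theorem right_le_gridFun {X : Set (Grid a0 a1)} (h : ¬ (Prod.fst '' X).Finite) :
    a1 ≤ gridFun a0 a1 X := by
  by_cases h' : (Prod.snd '' X).Finite
  · exact (gridFun_of_columns h h').ge
  · exact le_sup_right.trans (gridFun_of_infinite h h').ge

theorem gridFun_mono : Monotone (gridFun a0 a1) := by
  intro X Y hXY
  by_cases h : (Prod.fst '' Y).Finite
  · by_cases h' : (Prod.snd '' Y).Finite
    · have hY := (finite_iff_images Y).2 ⟨h, h'⟩
      rw [gridFun_of_finite hY, gridFun_of_finite (hY.subset hXY)]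
      exact Finset.sup_mono (Set.Finite.toFinset_subset_toFinset.2 hXY)
    · exact (gridFun_le_left (h.subset (Set.image_mono hXY))).trans (left_le_gridFun h')
  · by_cases h' : (Prod.snd '' Y).Finite
    · exact (gridFun_le_right (h'.subset (Set.image_mono hXY))).trans (right_le_gridFun h)
    · exact (gridFun_le X).trans (gridFun_of_infinite h h').ge

theorem gridFun_union (X Y : Set (Grid a0 a1)) :
    gridFun a0 a1 (X ∪ Y) = gridFun a0 a1 X ⊔ gridFun a0 a1 Y := by
  classical
  refine le_antisymm ?_ (sup_le (gridFun_mono Set.subset_union_left)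
    (gridFun_mono Set.subset_union_right))
  -- A union has infinitely many rows (columns) only if one of its two parts does.
  have key0 : ¬ (Prod.snd '' (X ∪ Y)).Finite → a0 ≤ gridFun a0 a1 X ⊔ gridFun a0 a1 Y := by
    rw [Set.image_union, Set.finite_union, not_and_or]
    rintro (h | h)
    · exact (left_le_gridFun h).trans le_sup_left
    · exact (left_le_gridFun h).trans le_sup_right
  have key1 : ¬ (Prod.fst '' (X ∪ Y)).Finite → a1 ≤ gridFun a0 a1 X ⊔ gridFun a0 a1 Y := by
    rw [Set.image_union, Set.finite_union, not_and_or]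
    rintro (h | h)
    · exact (right_le_gridFun h).trans le_sup_left
    · exact (right_le_gridFun h).trans le_sup_right
  by_cases h : (Prod.fst '' (X ∪ Y)).Finite
  · by_cases h' : (Prod.snd '' (X ∪ Y)).Finite
    · have hXY := (finite_iff_images _).2 ⟨h, h'⟩
      have hX := hXY.subset Set.subset_union_left
      have hY := hXY.subset Set.subset_union_right
      rw [gridFun_of_finite hXY, gridFun_of_finite hX, gridFun_of_finite hY, ← Finset.sup_union,
        Set.Finite.toFinset_union hX hY]
    · exact (gridFun_le_left h).trans (key0 h')
  · by_cases h' : (Prod.snd '' (X ∪ Y)).Finite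
    · exact (gridFun_le_right h').trans (key1 h)
    · exact (gridFun_le _).trans (sup_le (key0 h') (key1 h))

theorem gridFun_singleton (p : Grid a0 a1) : gridFun a0 a1 {p} = weight p := by
  rw [gridFun_of_finite (Set.finite_singleton p)]; simp

/-- A finite set of common lower bounds has its join as a common lower bound, so the absence of a
largest one forces infinitely many. -/
theorem infinite_commonLower
    (hQ : ¬ ∃ m : S, (m ≤ a0 ∧ m ≤ a1) ∧ ∀ x : S, x ≤ a0 → x ≤ a1 → x ≤ m) :
    Infinite (CommonLower a0 a1) := by
  by_contra hfin
  rw [not_infinite_iff_finite] at hfin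
  have := Fintype.ofFinite (CommonLower a0 a1)
  exact hQ ⟨Finset.univ.sup (fun q : CommonLower a0 a1 => q.1),
    ⟨Finset.sup_le fun q _ => q.2.1, Finset.sup_le fun q _ => q.2.2⟩,
    fun x h0 h1 => Finset.le_sup (f := fun q : CommonLower a0 a1 => q.1)
      (Finset.mem_univ ⟨x, h0, h1⟩)⟩

end


/-- Let `S` be a join-semilattice with a least element `0`, and let
`a0, a1 ∈ S` be such that the set `Q = {x ∈ S : x ≤ a0 and x ≤ a1}` has no largest
element.  Then there exist a Boolean algebra `B` and a `⟨∨,0⟩`-homomorphism `μ : B → S`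
such that (a) `μ 1 = a0 ⊔ a1`, and (b) there are no maps `μ0 μ1 : B → S` satisfying:
(i) `μ x = μ0 x ⊔ μ1 x` for all `x`; (ii) `μ0` and `μ1` are order-preserving;
(iii) `μ0 1 ≤ a0` and `μ1 1 ≤ a1`. -/
theorem stmt0 {S : Type u} [SemilatticeSup S] [OrderBot S] (a0 a1 : S)
    (hQ : ¬ ∃ m : S, (m ≤ a0 ∧ m ≤ a1) ∧ ∀ x : S, x ≤ a0 → x ≤ a1 → x ≤ m) :
    ∃ (B : Type u) (_ : BooleanAlgebra B) (μ : SupBotHom B S),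
      μ ⊤ = a0 ⊔ a1 ∧
      ¬ ∃ μ0 μ1 : B → S,
          (∀ x : B, μ x = μ0 x ⊔ μ1 x) ∧ Monotone μ0 ∧ Monotone μ1 ∧
            μ0 ⊤ ≤ a0 ∧ μ1 ⊤ ≤ a1 := by
  have hinf : Infinite (CommonLower a0 a1) := infinite_commonLower hQ
  let μ : SupBotHom (Set (Grid a0 a1)) S :=
    { toFun := gridFun a0 a1
      map_sup' := gridFun_union
      map_bot' := by
        change gridFun a0 a1 ∅ = ⊥
        rw [gridFun_of_finite Set.finite_empty]
        simp }
  refine ⟨Set (Grid a0 a1), inferInstance, μ, ?_, ?_⟩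
  · have hr : ¬ (Prod.fst '' (Set.univ : Set (Grid a0 a1))).Finite := by
      rw [Set.image_univ, Set.range_eq_univ.2 Prod.fst_surjective]
      exact Set.infinite_univ
    have hc : ¬ (Prod.snd '' (Set.univ : Set (Grid a0 a1))).Finite := by
      rw [Set.image_univ, Set.range_eq_univ.2 Prod.snd_surjective]
      exact Set.infinite_univ
    exact gridFun_of_infinite hr hc
  · rintro ⟨μ0, μ1, hμ, hm0, hm1, h0, h1⟩
    change ∀ X, gridFun a0 a1 X = _ at hμ
    let row (q : CommonLower a0 a1) : Set (Grid a0 a1) := {p | p.1 = q}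
    let col (φ : CommonLower a0 a1 → CommonLower a0 a1) : Set (Grid a0 a1) := {p | p.2 = φ}
    have hrow (q) : μ1 (row q) ≤ a0 ∧ μ1 (row q) ≤ a1 := by
      refine ⟨?_, (hm1 le_top).trans h1⟩
      have hfin : (Prod.fst '' row q).Finite :=
        (Set.finite_singleton q).subset (by rintro _ ⟨p, hp, rfl⟩; exact hp)
      exact (le_sup_right.trans (hμ _).ge).trans (gridFun_le_left hfin)
    have hcol (φ) : μ0 (col φ) ≤ a0 ∧ μ0 (col φ) ≤ a1 := by
      refine ⟨(hm0 le_top).trans h0, ?_⟩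
      have hfin : (Prod.snd '' col φ).Finite :=
        (Set.finite_singleton φ).subset (by rintro _ ⟨p, hp, rfl⟩; exact hp)
      exact (le_sup_left.trans (hμ _).ge).trans (gridFun_le_right hfin)
    have hex (q : CommonLower a0 a1) : ∃ r : CommonLower a0 a1, ¬ r.1 ≤ q.1 ⊔ μ1 (row q) := by
      by_contra! hall
      exact hQ ⟨q.1 ⊔ μ1 (row q), ⟨sup_le q.2.1 (hrow q).1, sup_le q.2.2 (hrow q).2⟩,
        fun x hx0 hx1 => hall ⟨x, hx0, hx1⟩⟩
    choose φ hφ using hex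
    -- Diagonalization: evaluate `φ` at the bound supplied by its own column.
    let c : CommonLower a0 a1 := ⟨μ0 (col φ), hcol φ⟩
    apply hφ c
    have hw : (φ c).1 = gridFun a0 a1 {(c, φ)} := (gridFun_singleton (c, φ)).symm
    rw [hw, hμ]
    exact sup_le_sup (hm0 (Set.singleton_subset_iff.2 rfl)) (hm1 (Set.singleton_subset_iff.2 rfl))
end

section
/- Let B be a Boolean algebra, let I₀ and I₁ be ideals of B with 1 ∉ I₀ and 1 ∉ I₁, and set I = I₀ ∩ I₁. Let S be a join-semilattice with least element 0, let a₀, a₁ ∈ S, and let ν : I → S be a map such that ν(0) = 0, ν(x ∨ y) = ν(x) ∨ ν(y) for all x, y ∈ I, and ν(x) ≤ a₀ and ν(x) ≤ a₁ for all x ∈ I. Then the map μ : B → S defined by μ(x) = ν(x) if x ∈ I, μ(x) = a₀ if x ∈ I₀ \ I, μ(x) = a₁ if x ∈ I₁ \ I, and μ(x) = a₀ ∨ a₁ if x ∉ I₀ ∪ I₁, is a ⟨∨,0⟩-homomorphism, i.e., μ(0) = 0 and μ(x ∨ y) = μ(x) ∨ μ(y) for all x, y ∈ B. -/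
/-!
Since `I0` and `I1` are ideals, `x ⊔ y` lies in one of them exactly when both `x` and `y` do.
Hence the classes of `x` and `y` determine that of `x ⊔ y`. If both elements lie in `I0 ∩ I1`,
additivity of `μ` is that of `ν`; otherwise it follows from the semilattice laws for `a0` and `a1`,
together with the fact that on `I0 ∩ I1` the map `μ` is bounded by both `a0` and `a1`.
-/

/-- Let `B` be a Boolean algebra, `I₀` and `I₁` ideals of `B`
(nonempty, downward closed, closed under finite joins) with `1 ∉ I₀` and `1 ∉ I₁`, and
let `I = I₀ ∩ I₁`.  Let `S` be a join-semilattice with least element `0`, let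
`a₀, a₁ ∈ S`, and let `ν : I → S` (here a map `ν : B → S` whose values are only
constrained on `I`) satisfy `ν 0 = 0`, `ν (x ⊔ y) = ν x ⊔ ν y` for `x, y ∈ I`, and
`ν x ≤ a₀`, `ν x ≤ a₁` for `x ∈ I`.  Then the map `μ : B → S` equal to `ν` on `I`,
to `a₀` on `I₀ \ I`, to `a₁` on `I₁ \ I`, and to `a₀ ⊔ a₁` off `I₀ ∪ I₁`, is a
`⟨∨,0⟩`-homomorphism. -/
theorem stmt7 {B : Type u} [BooleanAlgebra B] (I0 I1 : Set B)
    (hI0ne : I0.Nonempty) (hI1ne : I1.Nonempty)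
    (hI0down : ∀ x y : B, x ≤ y → y ∈ I0 → x ∈ I0)
    (hI1down : ∀ x y : B, x ≤ y → y ∈ I1 → x ∈ I1)
    (hI0sup : ∀ x y : B, x ∈ I0 → y ∈ I0 → x ⊔ y ∈ I0)
    (hI1sup : ∀ x y : B, x ∈ I1 → y ∈ I1 → x ⊔ y ∈ I1)
    (hI0top : (⊤ : B) ∉ I0) (hI1top : (⊤ : B) ∉ I1)
    {S : Type v} [SemilatticeSup S] [OrderBot S] (a0 a1 : S)
    (ν : B → S)
    (hν0 : ν ⊥ = ⊥)
    (hνsup : ∀ x y : B, x ∈ I0 ∩ I1 → y ∈ I0 ∩ I1 → ν (x ⊔ y) = ν x ⊔ ν y)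
    (hνle : ∀ x ∈ I0 ∩ I1, ν x ≤ a0 ∧ ν x ≤ a1)
    (μ : B → S)
    (hμI : ∀ x ∈ I0 ∩ I1, μ x = ν x)
    (hμ0 : ∀ x : B, x ∈ I0 → x ∉ I1 → μ x = a0)
    (hμ1 : ∀ x : B, x ∉ I0 → x ∈ I1 → μ x = a1)
    (hμout : ∀ x : B, x ∉ I0 → x ∉ I1 → μ x = a0 ⊔ a1) :
    μ ⊥ = ⊥ ∧ ∀ x y : B, μ (x ⊔ y) = μ x ⊔ μ y := by
  have mem0 : ∀ x y : B, x ⊔ y ∈ I0 ↔ x ∈ I0 ∧ y ∈ I0 := fun x y =>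
    ⟨fun h => ⟨hI0down _ _ le_sup_left h, hI0down _ _ le_sup_right h⟩,
      fun h => hI0sup _ _ h.1 h.2⟩
  have mem1 : ∀ x y : B, x ⊔ y ∈ I1 ↔ x ∈ I1 ∧ y ∈ I1 := fun x y =>
    ⟨fun h => ⟨hI1down _ _ le_sup_left h, hI1down _ _ le_sup_right h⟩,
      fun h => hI1sup _ _ h.1 h.2⟩
  refine ⟨?_, fun x y => ?_⟩
  · obtain ⟨z, hz⟩ := hI0ne
    obtain ⟨w, hw⟩ := hI1ne
    rw [hμI ⊥ ⟨hI0down _ _ bot_le hz, hI1down _ _ bot_le hw⟩, hν0]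
  -- On `I` the values of `μ` are absorbed by those off `I`.
  have le0 : ∀ z, z ∈ I0 → z ∈ I1 → μ z ≤ a0 := fun z h h' =>
    (hμI z ⟨h, h'⟩).trans_le (hνle z ⟨h, h'⟩).1
  have le1 : ∀ z, z ∈ I0 → z ∈ I1 → μ z ≤ a1 := fun z h h' =>
    (hμI z ⟨h, h'⟩).trans_le (hνle z ⟨h, h'⟩).2
  have hsup : x ∈ I0 → x ∈ I1 → y ∈ I0 → y ∈ I1 → μ (x ⊔ y) = μ x ⊔ μ y := by
    intro hx0 hx1 hy0 hy1
    rw [hμI x ⟨hx0, hx1⟩, hμI y ⟨hy0, hy1⟩,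
      hμI _ ⟨hI0sup _ _ hx0 hy0, hI1sup _ _ hx1 hy1⟩, hνsup x y ⟨hx0, hx1⟩ ⟨hy0, hy1⟩]
  -- The sixteen cases given by membership of `x` and `y` in `I0` and `I1`.
  by_cases hx0 : x ∈ I0 <;> by_cases hx1 : x ∈ I1 <;>
    by_cases hy0 : y ∈ I0 <;> by_cases hy1 : y ∈ I1 <;>
    first
    | exact hsup hx0 hx1 hy0 hy1
    | simp [hx0, hx1, hy0, hy1, mem0, mem1, hμ0, hμ1, hμout, le0, le1,
        sup_comm, sup_left_comm]
end
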